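/- arXiv:2104.09030 — 3 statements merged into one kernel-verified Lean document; each statement's English description precedes it below -/
import Mathlib

section
/- Let g ≥ 1 and let Q ∈ GL_g(ℚ) be irreducible. Then the action of Γ_Q := {γ ∈ SL_g(ℤ) : γQγ⁻¹ = Q} on ℚ^g ∖ {0} is free: for x ∈ ℚ^g ∖ {0} and γ ∈ Γ_Q, γx = x implies γ = 1. -/
open Matrix

/-- If the characteristic polynomial of a matrix over a field is irreducible, then every nonzero
vector is cyclic. -/
theorem Matrix.exists_aeval_mulVec_eq_of_irreducible_charpoly {K : Type*} [Field K] {n : ℕ}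
    {Q : Matrix (Fin n) (Fin n) K} (hirr : Irreducible Q.charpoly) {x : Fin n → K} (hx : x ≠ 0)
    (y : Fin n → K) : ∃ p : Polynomial K, Polynomial.aeval Q p *ᵥ x = y := by
  let φ : Polynomial.degreeLT K n →ₗ[K] (Fin n → K) :=
    { toFun := fun p => Polynomial.aeval Q (p : Polynomial K) *ᵥ x
      map_add' := fun p q => by simp [add_mulVec]
      map_smul' := fun c p => by simp [smul_mulVec] }
  have hφ : Function.Injective φ := by
    rw [← LinearMap.ker_eq_bot, LinearMap.ker_eq_bot']
    rintro ⟨p, hp⟩ (hpx : Polynomial.aeval Q p *ᵥ x = 0)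
    by_contra hne
    have hp0 : p ≠ 0 := fun h => hne (Subtype.ext h)
    have hdvd : ¬ Q.charpoly ∣ p := by
      refine Polynomial.not_dvd_of_degree_lt hp0 ?_
      rw [Q.charpoly_degree_eq_dim, Fintype.card_fin]
      exact Polynomial.mem_degreeLT.mp hp
    obtain ⟨u, v, huv⟩ := hirr.coprime_iff_not_dvd.mpr hdvd
    apply hx
    have := congrArg (fun r => Polynomial.aeval Q r *ᵥ x) huv
    simpa [Q.aeval_self_charpoly, ← mulVec_mulVec, hpx] using this.symm
  have hdim : Module.finrank K (Polynomial.degreeLT K n) = Module.finrank K (Fin n → K) :=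
    (Polynomial.degreeLTEquiv K n).finrank_eq
  have : FiniteDimensional K (Polynomial.degreeLT K n) :=
    (Polynomial.degreeLTEquiv K n).symm.finiteDimensional
  obtain ⟨p, hp⟩ := (LinearMap.injective_iff_surjective_of_finrank_eq_finrank hdim).mp hφ y
  exact ⟨p, hp⟩

/-- For `g ≥ 1` and `Q ∈ GL_g(ℚ)` irreducible, the action of
`Γ_Q = {γ ∈ SL_g(ℤ) : γQγ⁻¹ = Q}` on `ℚ^g ∖ {0}` is free. -/
theorem stmt4 (g : ℕ) (hg : 1 ≤ g) (Q : Matrix (Fin g) (Fin g) ℚ)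
    (hQ : IsUnit Q) (hirr : Irreducible Q.charpoly)
    (γ : Matrix (Fin g) (Fin g) ℚ)
    (hγint : ∀ i j, ∃ n : ℤ, γ i j = (n : ℚ)) (hdet : γ.det = 1)
    (hstab : γ * Q * γ⁻¹ = Q)
    (x : Fin g → ℚ) (hx : x ≠ 0) (hfix : γ *ᵥ x = x) :
    γ = 1 := by
  have hcomm : Commute γ Q := by
    have h := congrArg (· * γ) hstab
    simpa [commute_iff_eq, mul_assoc, nonsing_inv_mul γ (by simp [hdet])] using h
  apply mulVec_injective
  funext y
  obtain ⟨p, rfl⟩ := exists_aeval_mulVec_eq_of_irreducible_charpoly hirr hx y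
  have hp : Commute γ (Polynomial.aeval Q p) := by
    rw [Polynomial.aeval_eq_sum_range]
    exact Commute.sum_right _ _ _ fun i _ => (hcomm.pow_right i).smul_right _
  rw [mulVec_mulVec, hp.eq, ← mulVec_mulVec, hfix, one_mulVec]
end

section
/- Let g ≥ 1, let Q ∈ GL_g(ℚ) be irreducible, and let α ∈ ℚ^g ∖ {0}. Then there exists k₀ ≥ 0 such that H_+^{(k)} = H_-^{(k)} = ∅ for all k ≥ k₀ + 1, and ℝ^g ∖ {0} is the disjoint union ⨆_{k=0}^{k₀} (H_+^{(k)} ⊔ H_-^{(k)}). -/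
open Matrix

/-- The set `H_+^{(k)} = {x : ⟨x,(Qᵀ)^k α⟩ > 0, ⟨x,(Qᵀ)^j α⟩ = 0 for j < k}`. -/
def Hplus {g : ℕ} (Q : Matrix (Fin g) (Fin g) ℚ) (α : Fin g → ℚ) (k : ℕ) :
    Set (Fin g → ℝ) :=
  {x | 0 < x ⬝ᵥ ((Q.map ((↑) : ℚ → ℝ))ᵀ ^ k *ᵥ fun j => (α j : ℝ)) ∧
       ∀ j < k, x ⬝ᵥ ((Q.map ((↑) : ℚ → ℝ))ᵀ ^ j *ᵥ fun j => (α j : ℝ)) = 0}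

/-- The set `H_-^{(k)} = {x : ⟨x,(Qᵀ)^k α⟩ < 0, ⟨x,(Qᵀ)^j α⟩ = 0 for j < k}`. -/
def Hminus {g : ℕ} (Q : Matrix (Fin g) (Fin g) ℚ) (α : Fin g → ℚ) (k : ℕ) :
    Set (Fin g → ℝ) :=
  {x | x ⬝ᵥ ((Q.map ((↑) : ℚ → ℝ))ᵀ ^ k *ᵥ fun j => (α j : ℝ)) < 0 ∧
       ∀ j < k, x ⬝ᵥ ((Q.map ((↑) : ℚ → ℝ))ᵀ ^ j *ᵥ fun j => (α j : ℝ)) = 0}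

/-- A polynomial of smaller degree than an irreducible characteristic polynomial, evaluated at the
matrix, kills no nonzero vector unless it is zero. -/
lemma eq_zero_of_aeval_mulVec_eq_zero {K n : Type*} [Field K] [Fintype n] [DecidableEq n]
    {A : Matrix n n K} (hirr : Irreducible A.charpoly) {v : n → K} (hv : v ≠ 0)
    {p : Polynomial K} (hdeg : p.degree < A.charpoly.degree)
    (h : Polynomial.aeval A p *ᵥ v = 0) : p = 0 := by
  by_contra hp
  have hcop : IsCoprime A.charpoly p :=
    hirr.coprime_iff_not_dvd.2 (Polynomial.not_dvd_of_degree_lt hp hdeg)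
  obtain ⟨a, b, hab⟩ := hcop
  have hone := congrArg (fun q => Polynomial.aeval A q *ᵥ v) hab
  simp only [map_add, map_mul, aeval_self_charpoly, mul_zero, zero_add, ← mulVec_mulVec, h,
    mulVec_zero, map_one, one_mulVec] at hone
  exact hv hone.symm

/-- The Krylov matrix, with rows `v, A v, …, A ^ (g - 1) v`, is nonsingular when the characteristic
polynomial of `A` is irreducible and `v ≠ 0`. -/
lemma det_krylov_ne_zero {K : Type*} [Field K] {g : ℕ} {A : Matrix (Fin g) (Fin g) K}
    (hirr : Irreducible A.charpoly) {v : Fin g → K} (hv : v ≠ 0) :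
    (of fun i : Fin g => A ^ (i : ℕ) *ᵥ v).det ≠ 0 := by
  intro hdet
  obtain ⟨c, hc, hcv⟩ := exists_vecMul_eq_zero_iff.2 hdet
  have hdeg : (∑ i : Fin g, Polynomial.C (c i) * Polynomial.X ^ (i : ℕ)).degree
      < A.charpoly.degree := by
    rw [charpoly_degree_eq_dim, Fintype.card_fin]
    exact Polynomial.degree_sum_fin_lt c
  have hp := eq_zero_of_aeval_mulVec_eq_zero hirr hv hdeg (by
    rw [← hcv, vecMul_eq_sum, map_sum, sum_mulVec]
    refine Finset.sum_congr rfl fun i _ => ?_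
    rw [map_mul, Polynomial.aeval_C, map_pow, Polynomial.aeval_X, ← Algebra.smul_def, smul_mulVec]
    rfl)
  refine hc (funext fun i => ?_)
  have hcoeff := congrArg (fun q => q.coeff (i : ℕ)) hp
  simpa [Polynomial.coeff_C_mul, Polynomial.coeff_X_pow, Fin.val_inj] using hcoeff

/-- A real vector orthogonal to `α, Qᵀ α, …, (Qᵀ) ^ (g - 1) α` vanishes. -/
lemma eq_zero_of_forall_dotProduct_eq_zero {g : ℕ} {Q : Matrix (Fin g) (Fin g) ℚ}
    (hirr : Irreducible Q.charpoly) {α : Fin g → ℚ} (hα : α ≠ 0) {x : Fin g → ℝ}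
    (hx : ∀ j < g, x ⬝ᵥ ((Q.map ((↑) : ℚ → ℝ))ᵀ ^ j *ᵥ fun j => (α j : ℝ)) = 0) : x = 0 := by
  have hdet := det_krylov_ne_zero (A := Qᵀ) (by rwa [charpoly_transpose]) hα
  have hdet' : ((of fun i : Fin g => Qᵀ ^ (i : ℕ) *ᵥ α).map (Rat.castHom ℝ)).det ≠ 0 := by
    rw [← RingHom.mapMatrix_apply, ← RingHom.map_det]
    simpa using hdet
  refine eq_zero_of_mulVec_eq_zero hdet' (funext fun i => ?_)
  rw [Pi.zero_apply, ← hx i i.isLt, dotProduct_comm]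
  refine congrArg (· ⬝ᵥ x) (funext fun l => ?_)
  have hcast := RingHom.map_mulVec (Rat.castHom ℝ) (Qᵀ ^ (i : ℕ)) α l
  have hpow : (Qᵀ ^ (i : ℕ)).map (Rat.castHom ℝ) = (Q.map ((↑) : ℚ → ℝ))ᵀ ^ (i : ℕ) := by
    rw [← RingHom.mapMatrix_apply, map_pow]
    rfl
  rw [hpow] at hcast
  exact hcast

/-- A sequence with a nonzero term of index at most `N` has a unique first nonzero term, of a unique
sign. -/
lemma existsUnique_sign_of_ne_zero {R : Type*} [Zero R] [LinearOrder R] (f : ℕ → R) {N : ℕ}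
    (h : ∃ j ≤ N, f j ≠ 0) :
    ∃! p : ℕ × Bool, p.1 ≤ N ∧
      (if p.2 then 0 < f p.1 ∧ ∀ j < p.1, f j = 0 else f p.1 < 0 ∧ ∀ j < p.1, f j = 0) := by
  classical
  obtain ⟨j, hj, hfj⟩ := h
  have hex : ∃ n, f n ≠ 0 := ⟨j, hfj⟩
  have hle : Nat.find hex ≤ N := (Nat.find_min' hex hfj).trans hj
  have hmin : ∀ i < Nat.find hex, f i = 0 := fun i hi => not_not.1 (Nat.find_min hex hi)
  have hfirst : ∀ k, f k ≠ 0 → (∀ i < k, f i = 0) → k = Nat.find hex := fun k hk hzero =>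
    ((Nat.find_eq_iff hex).2 ⟨hk, fun i hi => not_not.2 (hzero i hi)⟩).symm
  rcases (Nat.find_spec hex).lt_or_gt with hneg | hpos
  · refine ⟨(Nat.find hex, false), ⟨hle, (if_neg Bool.false_ne_true).mpr ⟨hneg, hmin⟩⟩, ?_⟩
    rintro ⟨k, _ | _⟩ ⟨-, hk⟩
    · simp only [Bool.false_eq_true, if_false] at hk
      rw [hfirst k hk.1.ne hk.2]
    · simp only [if_true] at hk
      rw [hfirst k hk.1.ne' hk.2] at hk
      exact absurd hk.1 hneg.asymm
  · refine ⟨(Nat.find hex, true), ⟨hle, (if_pos rfl).mpr ⟨hpos, hmin⟩⟩, ?_⟩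
    rintro ⟨k, _ | _⟩ ⟨-, hk⟩
    · simp only [Bool.false_eq_true, if_false] at hk
      rw [hfirst k hk.1.ne hk.2] at hk
      exact absurd hk.1 hpos.asymm
    · simp only [if_true] at hk
      rw [hfirst k hk.1.ne' hk.2]

/-- for irreducible `Q` and `α ∈ ℚ^g ∖ {0}` there is `k₀` with
`H_±^{(k)} = ∅` for `k ≥ k₀ + 1`, and `ℝ^g ∖ {0}` is the disjoint union of the sets
`H_+^{(k)}, H_-^{(k)}` for `k ≤ k₀` (each nonzero `x` lies in exactly one of them). -/
theorem stmt8 (g : ℕ) (hg : 1 ≤ g) (Q : Matrix (Fin g) (Fin g) ℚ)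
    (hQ : IsUnit Q) (hirr : Irreducible Q.charpoly)
    (α : Fin g → ℚ) (hα : α ≠ 0) :
    ∃ k₀ : ℕ,
      (∀ k, k₀ + 1 ≤ k → Hplus Q α k = ∅ ∧ Hminus Q α k = ∅) ∧
      ∀ x : Fin g → ℝ, x ≠ 0 →
        ∃! p : ℕ × Bool, p.1 ≤ k₀ ∧ x ∈ (if p.2 then Hplus Q α p.1 else Hminus Q α p.1) := by
  have hvanish (x : Fin g → ℝ) :
      (∀ j < g, x ⬝ᵥ ((Q.map ((↑) : ℚ → ℝ))ᵀ ^ j *ᵥ fun j => (α j : ℝ)) = 0) → x = 0 :=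
    eq_zero_of_forall_dotProduct_eq_zero hirr hα
  refine ⟨g - 1, fun k hk => ⟨?_, ?_⟩, fun x hx => ?_⟩
  · refine Set.eq_empty_of_forall_notMem fun x ⟨hpos, hzero⟩ => ?_
    rw [hvanish x fun j hj => hzero j (by omega), zero_dotProduct] at hpos
    exact hpos.false
  · refine Set.eq_empty_of_forall_notMem fun x ⟨hneg, hzero⟩ => ?_
    rw [hvanish x fun j hj => hzero j (by omega), zero_dotProduct] at hneg
    exact hneg.false
  · replace hvanish := mt (hvanish x) hx
    push Not at hvanish
    obtain ⟨j, hj, hne⟩ := hvanish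
    obtain ⟨p, hp, huniq⟩ := existsUnique_sign_of_ne_zero
      (fun j => x ⬝ᵥ ((Q.map ((↑) : ℚ → ℝ))ᵀ ^ j *ᵥ fun j => (α j : ℝ))) (N := g - 1)
      ⟨j, by omega, hne⟩
    refine ⟨p, ?_, fun q hq => huniq q ?_⟩
    · obtain ⟨k, _ | _⟩ := p <;> exact hp
    · obtain ⟨k, _ | _⟩ := q <;> exact hq
end

section
/- Let g ≥ 1, let a₁,…,a_g ∈ ℂ with Re aᵢ > 0 for all i, and let k₁,…,k_g ∈ ℤ_{≥0} with |k| := k₁ + ⋯ + k_g. Then ∫_{Δ^{g−1}} (∏_{i=1}^{g} tᵢ^{kᵢ}) · (Σ_{i=1}^{g} tᵢ aᵢ)^{−(g+|k|)} dt₂⋯dt_g = (k₁!⋯k_g!)/(g+|k|−1)! · ∏_{i=1}^{g} aᵢ^{−(kᵢ+1)}, where the integral is over Δ^{g−1} := {(t₂,…,t_g) ∈ ℝ^{g−1} : tᵢ ≥ 0, Σ_{i=2}^{g} tᵢ ≤ 1} and t₁ := 1 − Σ_{i=2}^{g} tᵢ. (This is the Hurwitz/Feynman parametrization formula; it is equivalent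 to the integral of ∏ᵢ⟨ξᵢ*,y⟩^{kᵢ}·ω(y)/⟨x,y⟩^{g+|k|} over the affine (g−1)-simplex with vertices ξ₁,…,ξ_g, with aᵢ = ⟨x,ξᵢ⟩, after pulling back, in which case the right-hand side acquires the factor det(ξ₁,…,ξ_g).) -/
open MeasureTheory

/-- The barycentric completion of `(t₂,…,t_g) ∈ ℝ^{g-1}`: the tuple
`(t₁, t₂, …, t_g)` with `t₁ := 1 − Σ_{i=2}^{g} tᵢ` (here `g = m + 1`). -/
noncomputable def fullT (m : ℕ) (t : Fin m → ℝ) : Fin (m + 1) → ℝ :=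
  Fin.cons (1 - ∑ j, t j) t

open Set Filter Topology

theorem norm_pow_mul_exp_neg_mul {r : ℂ} (n : ℕ) {x : ℝ} (hx : 0 ≤ x) :
    ‖(x : ℂ) ^ n * Complex.exp (-(r * x))‖ = x ^ n * Real.exp (-r.re * x) := by
  simp [Complex.norm_exp, abs_of_nonneg hx]

theorem integrableOn_pow_mul_exp_neg_mul {c : ℝ} (hc : 0 < c) (n : ℕ) :
    IntegrableOn (fun x : ℝ => x ^ n * Real.exp (-c * x)) (Ioi 0) := by
  simpa using integrableOn_rpow_mul_exp_neg_mul_rpow (p := 1) (s := n) (b := c)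
    (by linarith [n.cast_nonneg (α := ℝ)]) one_pos hc

theorem integrableOn_pow_mul_cexp_neg_mul {r : ℂ} (hr : 0 < r.re) (n : ℕ) :
    IntegrableOn (fun x : ℝ => (x : ℂ) ^ n * Complex.exp (-(r * x))) (Ioi 0) := by
  refine (integrableOn_pow_mul_exp_neg_mul hr n).mono' (by fun_prop) ?_
  filter_upwards [ae_restrict_mem measurableSet_Ioi] with x hx
  exact (norm_pow_mul_exp_neg_mul n (le_of_lt hx)).le

theorem tendsto_pow_mul_cexp_neg_mul {r : ℂ} (hr : 0 < r.re) (n : ℕ) :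
    Tendsto (fun x : ℝ => (x : ℂ) ^ n * Complex.exp (-(r * x))) atTop (𝓝 0) := by
  rw [tendsto_zero_iff_norm_tendsto_zero]
  have h := tendsto_rpow_mul_exp_neg_mul_atTop_nhds_zero n r.re hr
  refine h.congr' ?_
  filter_upwards [eventually_ge_atTop 0] with x hx
  rw [norm_pow_mul_exp_neg_mul n hx, Real.rpow_natCast]

/-- The Gamma integral with natural exponent and complex rate. -/
theorem integral_pow_mul_cexp_neg_mul_Ioi {r : ℂ} (hr : 0 < r.re) (n : ℕ) :
    ∫ x in Ioi (0 : ℝ), (x : ℂ) ^ n * Complex.exp (-(r * x)) =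
      (n.factorial : ℂ) * (r ^ (n + 1))⁻¹ := by
  have hr0 : r ≠ 0 := by rintro rfl; simp at hr
  have hexp (x : ℝ) : HasDerivAt (fun x : ℝ => Complex.exp (-(r * x)))
      (Complex.exp (-(r * x)) * (-(r * 1))) x :=
    ((Complex.ofRealCLM.hasDerivAt (x := x)).const_mul r).neg.cexp
  induction n with
  | zero =>
    have h := integral_Ioi_of_hasDerivAt_of_tendsto (a := 0) (m := 0)
      (hexp 0).continuousAt.continuousWithinAt (fun x _ => hexp x)
      (by simpa [IntegrableOn] using (integrableOn_pow_mul_cexp_neg_mul hr 0).mul_const (-(r * 1)))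
      (by simpa using tendsto_pow_mul_cexp_neg_mul hr 0)
    rw [integral_mul_const] at h
    simp only [Complex.ofReal_zero, mul_zero, neg_zero, Complex.exp_zero] at h
    simp only [pow_zero, one_mul, Nat.factorial_zero, Nat.cast_one, zero_add, pow_one]
    field_simp
    linear_combination -h
  | succ n ih =>
    have hd (x : ℝ) : HasDerivAt (fun x : ℝ => (x : ℂ) ^ (n + 1) * Complex.exp (-(r * x)))
        ((n + 1) * ((x : ℂ) ^ n * Complex.exp (-(r * x))) -
          r * ((x : ℂ) ^ (n + 1) * Complex.exp (-(r * x)))) x := by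
      convert! ((Complex.ofRealCLM.hasDerivAt (x := x)).pow (n + 1)).mul (hexp x) using 1
      simp
      ring
    have h1 := (integrableOn_pow_mul_cexp_neg_mul hr n).const_mul ((n : ℂ) + 1)
    have h2 := (integrableOn_pow_mul_cexp_neg_mul hr (n + 1)).const_mul r
    have h := integral_Ioi_of_hasDerivAt_of_tendsto (a := 0) (m := 0)
      (hd 0).continuousAt.continuousWithinAt (fun x _ => hd x) (h1.sub h2)
      (tendsto_pow_mul_cexp_neg_mul hr (n + 1))
    rw [integral_sub h1 h2, integral_const_mul, integral_const_mul, ih] at h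
    simp only [Complex.ofReal_zero, ne_eq, Nat.add_eq_zero_iff, one_ne_zero, and_false,
      not_false_eq_true, zero_pow, zero_mul, sub_zero] at h
    rw [Nat.factorial_succ, pow_succ r (n + 1), mul_inv]
    push_cast
    field_simp at h ⊢
    linear_combination -h

/-- The unimodular change of variables replacing the first coordinate by the sum of all. -/
theorem measurePreserving_cons_sub_sum (m : ℕ) :
    MeasurePreserving (fun p : (Fin m → ℝ) × ℝ =>
      (Fin.cons (p.2 - ∑ j, p.1 j) p.1 : Fin (m + 1) → ℝ)) := by
  have hshear : MeasurePreserving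
      (fun p : (Fin m → ℝ) × ℝ => (id p.1, p.2 - ∑ j, p.1 j)) :=
    (MeasurePreserving.id (volume : Measure (Fin m → ℝ))).skew_product
      (g := fun y s => s - ∑ j, y j) (by unfold Function.uncurry; fun_prop)
      (Eventually.of_forall fun y => map_sub_right_eq_self volume _)
  have h := ((volume_preserving_piFinSuccAbove (fun _ : Fin (m + 1) => ℝ) 0).symm.comp
    Measure.measurePreserving_swap).comp hshear
  convert! h using 1
  ext p : 1
  simp [MeasurableEquiv.piFinSuccAbove]
  rfl

/-- The closed unit simplex in `ℝ^m`. -/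
def closedUnitSimplex (m : ℕ) : Set (Fin m → ℝ) :=
  {t | (∀ i, 0 ≤ t i) ∧ ∑ i, t i ≤ 1}

theorem mem_closedUnitSimplex_iff {m : ℕ} {t : Fin m → ℝ} :
    t ∈ closedUnitSimplex m ↔ ∀ i, 0 ≤ fullT m t i := by
  simp [closedUnitSimplex, fullT, Fin.forall_fin_succ, and_comm]

theorem sum_fullT {m : ℕ} (t : Fin m → ℝ) : ∑ i, fullT m t i = 1 := by
  simp [fullT, Fin.sum_univ_succ]

theorem isCompact_closedUnitSimplex (m : ℕ) : IsCompact (closedUnitSimplex m) := by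
  refine (isCompact_Icc (a := (0 : Fin m → ℝ)) (b := 1)).of_isClosed_subset ?_ ?_
  · simp only [closedUnitSimplex, ofPred_and, ofPred_forall]
    exact (isClosed_iInter fun i => isClosed_le continuous_const (continuous_apply i)).inter
      (isClosed_le (by fun_prop) continuous_const)
  · rintro t ⟨h0, h1⟩
    exact ⟨h0, fun i => (Finset.single_le_sum (fun j _ => h0 j) (Finset.mem_univ i)).trans h1⟩

theorem continuous_fullT (m : ℕ) (i : Fin (m + 1)) : Continuous fun t => fullT m t i := by
  refine Fin.cases ?_ (fun j => ?_) i <;> simp only [fullT, Fin.cons_zero, Fin.cons_succ] <;>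
    fun_prop

theorem cons_smul_eq_smul_fullT {m : ℕ} (s : ℝ) (t : Fin m → ℝ) :
    (Fin.cons (s - ∑ j, (s • t) j) (s • t) : Fin (m + 1) → ℝ) = s • fullT m t := by
  ext i
  refine Fin.cases ?_ (fun j => ?_) i <;> simp [fullT, mul_sub, Finset.mul_sum]

/-- The density `x ^ n * exp (-r x)` on `[0, ∞)`, extended by zero. -/
noncomputable def gammaKernel (r : ℂ) (n : ℕ) : ℝ → ℂ :=
  (Ici 0).indicator fun x => (x : ℂ) ^ n * Complex.exp (-(r * x))

theorem integrable_gammaKernel {r : ℂ} (hr : 0 < r.re) (n : ℕ) :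
    Integrable (gammaKernel r n) := by
  rw [gammaKernel, integrable_indicator_iff measurableSet_Ici, integrableOn_Ici_iff_integrableOn_Ioi]
  exact integrableOn_pow_mul_cexp_neg_mul hr n

theorem integral_gammaKernel {r : ℂ} (hr : 0 < r.re) (n : ℕ) :
    ∫ x, gammaKernel r n x = (n.factorial : ℂ) * (r ^ (n + 1))⁻¹ := by
  rw [gammaKernel, integral_indicator measurableSet_Ici, integral_Ici_eq_integral_Ioi,
    integral_pow_mul_cexp_neg_mul_Ioi hr]

theorem prod_gammaKernel_of_nonneg {ι : Type*} [Fintype ι] (a : ι → ℂ) (k : ι → ℕ) {x : ι → ℝ}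
    (hx : ∀ i, 0 ≤ x i) :
    ∏ i, gammaKernel (a i) (k i) (x i) =
      (∏ i, (x i : ℂ) ^ k i) * Complex.exp (-∑ i, a i * x i) := by
  rw [← Finset.sum_neg_distrib, Complex.exp_sum, ← Finset.prod_mul_distrib]
  exact Finset.prod_congr rfl fun i _ => indicator_of_mem (hx i) _

theorem prod_gammaKernel_of_neg {ι : Type*} [Fintype ι] (a : ι → ℂ) (k : ι → ℕ) {x : ι → ℝ}
    {i : ι} (hx : x i < 0) : ∏ i, gammaKernel (a i) (k i) (x i) = 0 :=
  Finset.prod_eq_zero (Finset.mem_univ i) (indicator_of_notMem (by simpa using hx) _)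

theorem prod_gammaKernel_smul_fullT {m : ℕ} (a : Fin (m + 1) → ℂ) (k : Fin (m + 1) → ℕ)
    {s : ℝ} (hs : 0 < s) (t : Fin m → ℝ) :
    ∏ i, gammaKernel (a i) (k i) ((s • fullT m t) i) =
      (closedUnitSimplex m).indicator (fun t => (s : ℂ) ^ (∑ i, k i) *
        ((∏ i, (fullT m t i : ℂ) ^ k i) *
          Complex.exp (-((∑ i, (fullT m t i : ℂ) * a i) * s)))) t := by
  by_cases ht : t ∈ closedUnitSimplex m
  · rw [indicator_of_mem ht, prod_gammaKernel_of_nonneg a k (x := s • fullT m t) fun i =>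
      mul_nonneg hs.le (mem_closedUnitSimplex_iff.1 ht i)]
    simp only [Pi.smul_apply, smul_eq_mul, Complex.ofReal_mul, mul_pow, Finset.prod_mul_distrib,
      Finset.prod_pow_eq_pow_sum, Finset.sum_mul, mul_assoc]
    congr 5
    ext i
    ring
  · rw [indicator_of_notMem ht]
    obtain ⟨i, hi⟩ : ∃ i, fullT m t i < 0 := by
      simpa [mem_closedUnitSimplex_iff] using ht
    exact prod_gammaKernel_of_neg a k (mul_neg_of_pos_of_neg hs hi)

theorem exists_pos_le_re_sum_fullT {m : ℕ} {a : Fin (m + 1) → ℂ} (ha : ∀ i, 0 < (a i).re) :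
    ∃ c > 0, ∀ t ∈ closedUnitSimplex m, c ≤ (∑ i, (fullT m t i : ℂ) * a i).re := by
  obtain ⟨i₀, hi₀⟩ := Finite.exists_min fun i => (a i).re
  refine ⟨_, ha i₀, fun t ht => ?_⟩
  calc (a i₀).re = ∑ i, fullT m t i * (a i₀).re := by rw [← Finset.sum_mul, sum_fullT, one_mul]
    _ ≤ ∑ i, fullT m t i * (a i).re := Finset.sum_le_sum fun i _ =>
        mul_le_mul_of_nonneg_left (hi₀ i) (mem_closedUnitSimplex_iff.1 ht i)
    _ = _ := by simp

theorem fullT_le_one {m : ℕ} {t : Fin m → ℝ} (ht : t ∈ closedUnitSimplex m) (i : Fin (m + 1)) :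
    fullT m t i ≤ 1 :=
  sum_fullT t ▸ Finset.single_le_sum (fun j _ => mem_closedUnitSimplex_iff.1 ht j)
    (Finset.mem_univ i)

theorem integrable_radial_simplex {m : ℕ} {a : Fin (m + 1) → ℂ} (ha : ∀ i, 0 < (a i).re)
    (k : Fin (m + 1) → ℕ) (n : ℕ) :
    Integrable (Function.uncurry fun (s : ℝ) (t : Fin m → ℝ) =>
      (∏ i, (fullT m t i : ℂ) ^ k i) *
        ((s : ℂ) ^ n * Complex.exp (-((∑ i, (fullT m t i : ℂ) * a i) * s))))
      ((volume.restrict (Ioi 0)).prod (volume.restrict (closedUnitSimplex m))) := by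
  obtain ⟨c, hc, hca⟩ := exists_pos_le_re_sum_fullT ha
  have hmeas := (isCompact_closedUnitSimplex m).measurableSet
  have : IsFiniteMeasure (volume.restrict (closedUnitSimplex m)) :=
    ⟨by simpa using (isCompact_closedUnitSimplex m).measure_lt_top⟩
  have hdom := (integrableOn_pow_mul_exp_neg_mul hc n).mul_prod
    (integrable_const (μ := volume.restrict (closedUnitSimplex m)) (1 : ℝ))
  refine hdom.mono' ?_ ?_
  · have := continuous_fullT m
    unfold Function.uncurry
    exact Continuous.aestronglyMeasurable (by fun_prop)
  · rw [Measure.prod_restrict]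
    filter_upwards [ae_restrict_mem (measurableSet_Ioi.prod hmeas)] with ⟨s, t⟩ ⟨hs, ht⟩
    have hs : 0 < s := hs
    have ht : t ∈ closedUnitSimplex m := ht
    have hnn := mem_closedUnitSimplex_iff.1 ht
    have hprod : ‖∏ i, (fullT m t i : ℂ) ^ k i‖ ≤ 1 := by
      rw [norm_prod]
      refine Finset.prod_le_one (fun i _ => norm_nonneg _) fun i _ => ?_
      rw [norm_pow, Complex.norm_of_nonneg (hnn i)]
      exact pow_le_one₀ (hnn i) (fullT_le_one ht i)
    simp only [Function.uncurry]
    rw [norm_mul, norm_pow_mul_exp_neg_mul n hs.le, mul_one]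
    refine (mul_le_of_le_one_left (by positivity) hprod).trans ?_
    have := hca t ht
    gcongr

/-- Integration of a product of Gamma densities in the coordinates `x = s • fullT m t`. -/
theorem integral_prod_gammaKernel_eq {m : ℕ} {a : Fin (m + 1) → ℂ} (ha : ∀ i, 0 < (a i).re)
    (k : Fin (m + 1) → ℕ) :
    ∫ x : Fin (m + 1) → ℝ, ∏ i, gammaKernel (a i) (k i) (x i) =
      ∫ s in Ioi (0 : ℝ), ∫ t in closedUnitSimplex m,
        (∏ i, (fullT m t i : ℂ) ^ k i) *
          ((s : ℂ) ^ (m + ∑ i, k i) *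
            Complex.exp (-((∑ i, (fullT m t i : ℂ) * a i) * s))) := by
  set G : (Fin (m + 1) → ℝ) → ℂ := fun x => ∏ i, gammaKernel (a i) (k i) (x i) with hG
  have hGint : Integrable G := Integrable.fintype_prod fun i => integrable_gammaKernel (ha i) (k i)
  have hΦ := measurePreserving_cons_sub_sum m
  have hGΦ := hΦ.integrable_comp_of_integrable hGint
  rw [← hΦ.map_eq, integral_map hΦ.aemeasurable (hΦ.map_eq ▸ hGint.aestronglyMeasurable)]
  refine (integral_prod_symm _ hGΦ).trans ?_
  rw [← integral_indicator measurableSet_Ioi]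
  refine integral_congr_ae ?_
  filter_upwards [compl_mem_ae_iff.2 (measure_singleton (μ := volume) (0 : ℝ))] with s hs0
  rcases lt_or_gt_of_ne hs0 with hs | hs
  · rw [indicator_of_notMem (by simpa using hs.le)]
    refine integral_eq_zero_of_ae (Eventually.of_forall fun y => ?_)
    obtain ⟨i, hi⟩ : ∃ i, (Fin.cons (s - ∑ j, y j) y : Fin (m + 1) → ℝ) i < 0 := by
      by_contra! h
      have := Finset.sum_nonneg fun i (_ : i ∈ Finset.univ) => h i
      simp [Fin.sum_univ_succ] at this
      linarith
    exact prod_gammaKernel_of_neg a k hi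
  · rw [indicator_of_mem (mem_Ioi.2 hs)]
    have hscale := Measure.integral_comp_smul_of_nonneg volume
      (fun y : Fin m → ℝ => G (Fin.cons (s - ∑ j, y j) y)) s (hR := hs.le)
    have hs' : (s : ℂ) ^ m ≠ 0 := pow_ne_zero _ (by exact_mod_cast hs.ne')
    simp only [cons_smul_eq_smul_fullT, hG, prod_gammaKernel_smul_fullT a k hs,
      integral_indicator (isCompact_closedUnitSimplex m).measurableSet,
      Module.finrank_fin_fun, Complex.real_smul] at hscale
    push_cast at hscale
    rw [eq_inv_mul_iff_mul_eq₀ hs', ← integral_const_mul] at hscale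
    refine hscale.symm.trans (integral_congr_ae (Eventually.of_forall fun t => ?_))
    simp only [pow_add]
    ring

/-- Hurwitz formula / Feynman parametrization: for `g = m + 1 ≥ 1` complex
numbers `a i` with positive real part and exponents `k i ∈ ℕ` with `|k| = Σ k i`,
`∫_{Δ^{g-1}} (∏ tᵢ^{kᵢ}) (Σ tᵢaᵢ)^{-(g+|k|)} dt₂⋯dt_g
  = (∏ kᵢ!)/(g+|k|-1)! · ∏ aᵢ^{-(kᵢ+1)}`,
where the integral is over `{(t₂,…,t_g) : tᵢ ≥ 0, Σ tᵢ ≤ 1}` and `t₁ = 1 − Σ_{i≥2} tᵢ`. -/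
theorem stmt18 (m : ℕ) (a : Fin (m + 1) → ℂ) (ha : ∀ i, 0 < (a i).re)
    (k : Fin (m + 1) → ℕ) :
    (∫ t in {t : Fin m → ℝ | (∀ i, 0 ≤ t i) ∧ ∑ i, t i ≤ 1},
        (∏ i, ((fullT m t i : ℝ) : ℂ) ^ k i) *
          ((∑ i, ((fullT m t i : ℝ) : ℂ) * a i) ^ (m + 1 + ∑ i, k i))⁻¹)
      = ((∏ i, (Nat.factorial (k i) : ℂ)) / (Nat.factorial (m + ∑ i, k i) : ℂ)) *
          ∏ i, (a i ^ (k i + 1))⁻¹ := by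
  change ∫ t in closedUnitSimplex m, _ = _
  obtain ⟨c, hc, hca⟩ := exists_pos_le_re_sum_fullT ha
  have h := integral_prod_gammaKernel_eq ha k
  rw [integral_fintype_prod_volume_eq_prod (fun i => gammaKernel (a i) (k i)),
    integral_integral_swap (integrable_radial_simplex ha k _)] at h
  simp only [integral_gammaKernel (ha _), Finset.prod_mul_distrib] at h
  rw [div_mul_eq_mul_div, h, eq_div_iff (by exact_mod_cast Nat.factorial_ne_zero _),
    ← integral_mul_const]
  refine setIntegral_congr_fun (isCompact_closedUnitSimplex m).measurableSet fun t ht => ?_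
  rw [integral_const_mul, integral_pow_mul_cexp_neg_mul_Ioi (hc.trans_le (hca t ht)),
    add_right_comm m 1]
  ring
end
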